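/- Let ξ ≠ 0, γ ≥ 1, λ > 0, a₀ > 0, b₀ > 0, a₁, b₁ ∈ ℝ. Then the solution of the Emden system a''(t) − ξ²/a(t)³ = λ/(a(t)^{2γ−1} b(t)^{γ−1}), b''(t) = λ/(a(t)^{2γ−2} b(t)^{γ}), a(0) = a₀, a'(0) = a₁, b(0) = b₀, b'(0) = b₁ is global: there exist C² functions a, b : [0,∞) → ℝ with a(t) > 0 and b(t) > 0 for all t ≥ 0 satisfying the system and the initial conditions. -/

import Mathlib

/-!
Let `F' u = -u ^ (-γ)` with `F 1 = 0`. The energy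
`a' ^ 2 + b' ^ 2 / 2 + ξ ^ 2 / a ^ 2 + λ F (a ^ 2 b)` is conserved, and `γ ≥ 1` gives `F ≥ -log`.
Since `log (a ^ 2 b) ≤ 2 a + b`, the squared velocities are at most affine in `2 a + b`, so by
Grönwall the lengths and velocities stay bounded on bounded time intervals. Since also
`λ F (a ^ 2 b)` is at most the energy, `a ^ 2 b` stays away from `0`, and as `a` and `b` are
bounded, neither of them can collapse. Up to any given time the trajectory is thus confined to a
compact part of the phase space, so it continues forever: cut the vector field off outside a
neighbourhood of that compact set, solve the resulting globally Lipschitz equation, and observe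
that its solution never leaves the region where the cut-off changed nothing.
-/

open Set Filter
open scoped Topology NNReal Manifold

section Continuation

variable {E F : Type*} [NormedAddCommGroup E] [NormedSpace ℝ E] [NormedAddCommGroup F]
  [NormedSpace ℝ F] {U K : Set E} {v : E → E} {x₀ : E} {T : ℝ}

theorem exists_contDiff_hasCompactSupport_eq_on_nhdsSet [FiniteDimensional ℝ E] {n : ℕ∞}
    {f : E → F} (hf : ContDiffOn ℝ n f U) (hU : IsOpen U) (hK : IsCompact K) (hKU : K ⊆ U) :
    ∃ g : E → F, ContDiff ℝ n g ∧ HasCompactSupport g ∧ ∀ᶠ x in 𝓝ˢ K, g x = f x := by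
  obtain ⟨L, hL, hKL, hLU⟩ := exists_compact_between hK hU hKU
  obtain ⟨χ, hχK, hχL, -⟩ :=
    exists_contMDiffMap_one_nhds_of_subset_interior (n := n) 𝓘(ℝ, E) hK.isClosed hKL
  have hχ : ContDiff ℝ n χ := χ.contMDiff.contDiff
  have h_zero : ∀ x ∉ L, χ x • f x = 0 := fun x hx => by rw [hχL x hx, zero_smul]
  refine ⟨fun x => χ x • f x, contDiff_iff_contDiffAt.2 fun x => ?_,
    HasCompactSupport.intro hL h_zero, hχK.mono fun x hx => by simp only [hx, one_smul]⟩
  by_cases hx : x ∈ L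
  · exact hχ.contDiffAt.smul (hf.contDiffAt (hU.mem_nhds (hLU hx)))
  · refine contDiffAt_const (c := 0) |>.congr_of_eventuallyEq ?_
    filter_upwards [hL.isClosed.isOpen_compl.mem_nhds hx] with y hy using h_zero y hy

theorem isIntegralCurveOn_of_forall_eq {w : E → E} {x : ℝ → E} {s : Set ℝ}
    (hx : IsIntegralCurveOn x (fun _ => w) s) (hwv : ∀ t ∈ s, w (x t) = v (x t)) :
    IsIntegralCurveOn x (fun _ => v) s := fun t ht => (hx t ht).congr_deriv (hwv t ht)

theorem exists_isIntegralCurveOn_Icc_of_lipschitzWith [CompleteSpace E] {C B : ℝ≥0}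
    (hlip : LipschitzWith C v) (hbdd : ∀ x, ‖v x‖ ≤ B) (x₀ : E) (hT : 0 ≤ T) :
    ∃ x : ℝ → E, x 0 = x₀ ∧ IsIntegralCurveOn x (fun _ => v) (Icc 0 T) := by
  have hPL : IsPicardLindelof (fun _ => v) (tmin := 0) (tmax := T) ⟨0, left_mem_Icc.2 hT⟩ x₀
      (B * T.toNNReal) 0 B C :=
    .of_time_independent (fun x _ => hbdd x) hlip.lipschitzOnWith
      (by simp [hT])
  exact hPL.exists_eq_forall_mem_Icc_hasDerivWithinAt₀

theorem exists_isIntegralCurveOn_Icc_of_hasCompactSupport [CompleteSpace E]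
    (hv : ContDiff ℝ 1 v) (hsupp : HasCompactSupport v) (x₀ : E) (hT : 0 ≤ T) :
    ∃ x : ℝ → E, x 0 = x₀ ∧ IsIntegralCurveOn x (fun _ => v) (Icc 0 T) := by
  obtain ⟨C, hC⟩ := hv.lipschitzWith_of_hasCompactSupport hsupp one_ne_zero
  obtain ⟨B, hB⟩ := hsupp.exists_bound_of_continuous hv.continuous
  exact exists_isIntegralCurveOn_Icc_of_lipschitzWith hC
    (fun x => (hB x).trans (Real.le_coe_toNNReal B)) x₀ hT

theorem eqOn_Icc_of_isIntegralCurveOn (hv : LocallyLipschitzOn U v) {x y : ℝ → E} {a b : ℝ}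
    (hx : IsIntegralCurveOn x (fun _ => v) (Icc a b)) (hxU : MapsTo x (Icc a b) U)
    (hy : IsIntegralCurveOn y (fun _ => v) (Icc a b)) (hyU : MapsTo y (Icc a b) U)
    (hxy : x a = y a) : EqOn x y (Icc a b) := by
  have h_compact : IsCompact (x '' Icc a b ∪ y '' Icc a b) :=
    (isCompact_Icc.image_of_continuousOn hx.continuousOn).union
      (isCompact_Icc.image_of_continuousOn hy.continuousOn)
  obtain ⟨C, hC⟩ := (hv.mono (union_subset hxU.image_subset hyU.image_subset)
    ).exists_lipschitzOnWith_of_compact h_compact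
  have h_right : ∀ {z : ℝ → E}, IsIntegralCurveOn z (fun _ => v) (Icc a b) →
      ∀ t ∈ Ico a b, HasDerivWithinAt z (v (z t)) (Ici t) t := fun hz t ht =>
    (hz t (Ico_subset_Icc_self ht)).mono_of_mem_nhdsWithin (Icc_mem_nhdsGE_of_mem ht)
  exact ODE_solution_unique_of_mem_Icc_right (fun _ _ => hC)
    hx.continuousOn (h_right hx) (fun t ht => .inl ⟨t, Ico_subset_Icc_self ht, rfl⟩)
    hy.continuousOn (h_right hy) (fun t ht => .inr ⟨t, Ico_subset_Icc_self ht, rfl⟩) hxy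

theorem exists_isIntegralCurveOn_Ici_of_forall_Icc (hv : LocallyLipschitzOn U v)
    (h : ∀ T, 0 ≤ T → ∃ x : ℝ → E, x 0 = x₀ ∧ IsIntegralCurveOn x (fun _ => v) (Icc 0 T) ∧
      MapsTo x (Icc 0 T) U) :
    ∃ x : ℝ → E, x 0 = x₀ ∧ IsIntegralCurveOn x (fun _ => v) (Ici 0) ∧ MapsTo x (Ici 0) U := by
  choose! y hy₀ hy hyU using h
  have h_eq : ∀ T, 0 ≤ T → EqOn (fun t => y t t) (y T) (Icc 0 T) := fun T hT t ht =>
    have h_sub : Icc 0 t ⊆ Icc 0 T := Icc_subset_Icc_right ht.2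
    eqOn_Icc_of_isIntegralCurveOn hv (hy t ht.1) (hyU t ht.1) ((hy T hT).mono h_sub)
      ((hyU T hT).mono_left h_sub) (by rw [hy₀ t ht.1, hy₀ T hT]) (right_mem_Icc.2 ht.1)
  refine ⟨fun t => y t t, hy₀ 0 le_rfl, fun t ht => ?_, fun t ht => hyU t ht (right_mem_Icc.2 ht)⟩
  have hT : 0 ≤ t + 1 := add_nonneg ht zero_le_one
  have ht_mem : t ∈ Icc 0 (t + 1) := ⟨ht, by linarith⟩
  have h_deriv := (hy _ hT t ht_mem).congr_of_mem (h_eq _ hT) ht_mem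
  rw [← h_eq _ hT ht_mem] at h_deriv
  refine h_deriv.mono_of_mem_nhdsWithin ?_
  rw [← Ici_inter_Iic]
  exact inter_mem_nhdsWithin _ (Iic_mem_nhds (lt_add_one t))

/-- The a priori estimate behind continuation up to time `T`: a trajectory of `v` that starts at
`x₀` and has stayed in `U` so far is in `K`. -/
def ConfinesUpTo (v : E → E) (U : Set E) (x₀ : E) (T : ℝ) (K : Set E) : Prop :=
  ∀ s ∈ Icc 0 T, ∀ x : ℝ → E, x 0 = x₀ → IsIntegralCurveOn x (fun _ => v) (Icc 0 s) →
    MapsTo x (Icc 0 s) U → x s ∈ K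

theorem ConfinesUpTo.initial_mem (h : ConfinesUpTo v U x₀ T K) (hT : 0 ≤ T) (hx₀ : x₀ ∈ U) :
    x₀ ∈ K := by
  refine h 0 (left_mem_Icc.2 hT) (fun _ => x₀) rfl ?_ fun _ _ => hx₀
  rw [Icc_self]
  exact fun _ _ =>
    hasDerivWithinAt_iff_hasFDerivWithinAt.2 (.of_subsingleton subsingleton_singleton)

theorem ConfinesUpTo.mapsTo_of_eq_on_nhdsSet (h : ConfinesUpTo v U x₀ T K) (hT : 0 ≤ T)
    (hU : IsOpen U) (hx₀ : x₀ ∈ U) (hK : IsClosed K) (hKU : K ⊆ U) {w : E → E}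
    (hwv : ∀ᶠ z in 𝓝ˢ K, w z = v z) {x : ℝ → E} (hx : IsIntegralCurveOn x (fun _ => w) (Icc 0 T))
    (h_init : x 0 = x₀) : MapsTo x (Icc 0 T) K := by
  have hN : {z | w z = v z} ∩ U ∈ 𝓝ˢ K := inter_mem hwv (hU.mem_nhdsSet.2 hKU)
  have h_closed : IsClosed (x ⁻¹' K ∩ Icc 0 T) := by
    rw [inter_comm]
    exact hx.continuousOn.preimage_isClosed_of_isClosed isClosed_Icc hK
  refine h_closed.Icc_subset_of_forall_mem_nhdsGT_of_Icc_subset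
    (by rw [mem_preimage, h_init]; exact h.initial_mem hT hx₀) fun t ht h_past => ?_
  have ht_mem := Ico_subset_Icc_self ht
  have h_near : x ⁻¹' ({z | w z = v z} ∩ U) ∈ 𝓝[≥] t :=
    nhdsWithin_le_of_mem (Icc_mem_nhdsGE_of_mem ht) (hx.continuousWithinAt ht_mem
      (mem_nhdsSet_iff_forall.1 hN _ (h_past (right_mem_Icc.2 ht.1))))
  obtain ⟨u, hu, h_near⟩ := mem_nhdsGE_iff_exists_Icc_subset.1 h_near
  filter_upwards [Ioc_mem_nhdsGT hu, Ioc_mem_nhdsGT ht.2] with s hsu hsT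
  have hs_mem : s ∈ Icc 0 T := ⟨ht.1.trans hsT.1.le, hsT.2⟩
  have h_good : ∀ τ ∈ Icc 0 s, x τ ∈ {z | w z = v z} ∩ U := fun τ hτ => by
    rcases le_total τ t with hτt | hτt
    · exact subset_of_mem_nhdsSet hN (h_past ⟨hτ.1, hτt⟩)
    · exact h_near ⟨hτt, hτ.2.trans hsu.2⟩
  have hx_v : IsIntegralCurveOn x (fun _ => v) (Icc 0 s) := isIntegralCurveOn_of_forall_eq
    (hx.mono (Icc_subset_Icc_right hs_mem.2)) fun τ hτ => (h_good τ hτ).1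
  exact h s hs_mem x h_init hx_v fun τ hτ => (h_good τ hτ).2

theorem ConfinesUpTo.exists_isIntegralCurveOn_Icc [FiniteDimensional ℝ E]
    (h : ConfinesUpTo v U x₀ T K) (hT : 0 ≤ T) (hU : IsOpen U) (hv : ContDiffOn ℝ 1 v U)
    (hx₀ : x₀ ∈ U) (hK : IsCompact K) (hKU : K ⊆ U) :
    ∃ x : ℝ → E, x 0 = x₀ ∧ IsIntegralCurveOn x (fun _ => v) (Icc 0 T) ∧
      MapsTo x (Icc 0 T) U := by
  have := FiniteDimensional.complete ℝ E
  obtain ⟨w, hw, hw_supp, hwv⟩ :=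
    exists_contDiff_hasCompactSupport_eq_on_nhdsSet (n := 1) hv hU hK hKU
  obtain ⟨x, h_init, hx⟩ := exists_isIntegralCurveOn_Icc_of_hasCompactSupport hw hw_supp x₀ hT
  have hxK := h.mapsTo_of_eq_on_nhdsSet hT hU hx₀ hK.isClosed hKU hwv hx h_init
  exact ⟨x, h_init, isIntegralCurveOn_of_forall_eq hx fun t ht => hwv.self_of_nhdsSet _ (hxK ht),
    hxK.mono_right hKU⟩

theorem exists_isIntegralCurveOn_Ici_of_confinesUpTo [FiniteDimensional ℝ E] (hU : IsOpen U)
    (hv : ContDiffOn ℝ 1 v U) (hx₀ : x₀ ∈ U)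
    (h : ∀ T, 0 ≤ T → ∃ K ⊆ U, IsCompact K ∧ ConfinesUpTo v U x₀ T K) :
    ∃ x : ℝ → E, x 0 = x₀ ∧ IsIntegralCurveOn x (fun _ => v) (Ici 0) ∧ MapsTo x (Ici 0) U := by
  have hv_lip : LocallyLipschitzOn U v := fun z hz =>
    have ⟨C, s, hs, hC⟩ := (hv.contDiffAt (hU.mem_nhds hz)).exists_lipschitzOnWith
    ⟨C, s, mem_nhdsWithin_of_mem_nhds hs, hC⟩
  refine exists_isIntegralCurveOn_Ici_of_forall_Icc hv_lip fun T hT => ?_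
  obtain ⟨K, hKU, hK, h_conf⟩ := h T hT
  exact h_conf.exists_isIntegralCurveOn_Icc hT hU hv hx₀ hK hKU

end Continuation

section SecondDerivative

variable {F : Type*} [NormedAddCommGroup F] [NormedSpace ℝ F] {f f' f'' : ℝ → F} {t₀ : ℝ}

theorem contDiffOn_two_Ici_of_hasDerivWithinAt
    (hf : ∀ t ∈ Ici t₀, HasDerivWithinAt f (f' t) (Ici t₀) t)
    (hf' : ∀ t ∈ Ici t₀, HasDerivWithinAt f' (f'' t) (Ici t₀) t)
    (hf'' : ContinuousOn f'' (Ici t₀)) :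
    ContDiffOn ℝ 2 f (Ici t₀) := by
  have h_unique := uniqueDiffOn_Ici t₀
  have h_one : ContDiffOn ℝ 1 f' (Ici t₀) := (contDiffOn_one_iff_derivWithin h_unique).2
    ⟨fun t ht => (hf' t ht).differentiableWithinAt,
      hf''.congr fun t ht => (hf' t ht).derivWithin (h_unique t ht)⟩
  rw [← one_add_one_eq_two, contDiffOn_succ_iff_derivWithin h_unique]
  exact ⟨fun t ht => (hf t ht).differentiableWithinAt, by simp,
    h_one.congr fun t ht => (hf t ht).derivWithin (h_unique t ht)⟩

theorem derivWithin_derivWithin_Ici_of_hasDerivWithinAt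
    (hf : ∀ t ∈ Ici t₀, HasDerivWithinAt f (f' t) (Ici t₀) t)
    (hf' : ∀ t ∈ Ici t₀, HasDerivWithinAt f' (f'' t) (Ici t₀) t) :
    ∀ t ∈ Ici t₀, derivWithin (derivWithin f (Ici t₀)) (Ici t₀) t = f'' t := fun t ht => by
  have h_unique := uniqueDiffOn_Ici t₀
  have h_first : EqOn (derivWithin f (Ici t₀)) f' (Ici t₀) :=
    fun τ hτ => (hf τ hτ).derivWithin (h_unique τ hτ)
  rw [derivWithin_congr h_first (h_first ht), (hf' t ht).derivWithin (h_unique t ht)]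

end SecondDerivative

section InternalEnergy

/-- The internal energy at specific volume `u` of a gas with pressure `u ^ (-γ)`, normalised to
vanish at `u = 1`. -/
noncomputable def internalEnergy (γ u : ℝ) : ℝ := ∫ s in u..1, s ^ (-γ)

theorem hasDerivAt_internalEnergy (γ : ℝ) {u : ℝ} (hu : 0 < u) :
    HasDerivAt (internalEnergy γ) (-u ^ (-γ)) u := by
  have h_cont : ContinuousOn (fun s : ℝ => s ^ (-γ)) (Ioi 0) :=
    continuousOn_id.rpow_const fun s hs => .inl (ne_of_gt hs)
  exact intervalIntegral.integral_hasDerivAt_left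
    (h_cont.mono fun s hs => (lt_min hu one_pos).trans_le hs.1).intervalIntegrable
    (h_cont.stronglyMeasurableAtFilter isOpen_Ioi u hu) (h_cont.continuousAt (Ioi_mem_nhds hu))

theorem neg_log_le_internalEnergy {γ u : ℝ} (hγ : 1 ≤ γ) (hu : 0 < u) :
    -Real.log u ≤ internalEnergy γ u := by
  have h_int : ∀ r : ℝ, IntervalIntegrable (fun s : ℝ => s ^ r) MeasureTheory.volume u 1 := fun r =>
    intervalIntegral.intervalIntegrable_rpow (.inr (notMem_uIcc_of_lt hu one_pos))
  have h_log : -Real.log u = ∫ s in u..1, s ^ (-1 : ℝ) := by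
    simp only [Real.rpow_neg_one, integral_inv_of_pos hu one_pos, one_div, Real.log_inv]
  rw [h_log, internalEnergy]
  rcases le_total u 1 with hu1 | hu1
  · exact intervalIntegral.integral_mono_on hu1 (h_int _) (h_int _) fun s hs =>
      Real.rpow_le_rpow_of_exponent_ge (hu.trans_le hs.1) hs.2 (neg_le_neg hγ)
  · rw [intervalIntegral.integral_symm 1, intervalIntegral.integral_symm 1]
    exact neg_le_neg <| intervalIntegral.integral_mono_on hu1 (h_int _).symm (h_int _).symm
      fun s hs => Real.rpow_le_rpow_of_exponent_le hs.1 (neg_le_neg hγ)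

end InternalEnergy

section Emden

/-- The value of `a''` prescribed by the Emden system, as a function of `(a, b)`. -/
noncomputable def radialAcceleration (ξ lam γ : ℝ) (z : ℝ × ℝ) : ℝ :=
  ξ ^ 2 / z.1 ^ 3 + lam / (z.1 ^ (2 * γ - 1) * z.2 ^ (γ - 1))

/-- The value of `b''` prescribed by the Emden system, as a function of `(a, b)`. -/
noncomputable def axialAcceleration (lam γ : ℝ) (z : ℝ × ℝ) : ℝ :=
  lam / (z.1 ^ (2 * γ - 2) * z.2 ^ γ)

/-- The first-order form of the Emden system on the phase space of points `(a, b, a', b')`. -/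
noncomputable def emdenField (ξ lam γ : ℝ) (x : ℝ × ℝ × ℝ × ℝ) : ℝ × ℝ × ℝ × ℝ :=
  (x.2.2.1, x.2.2.2, radialAcceleration ξ lam γ (x.1, x.2.1),
    axialAcceleration lam γ (x.1, x.2.1))

/-- The part of the phase space in which both lengths `a` and `b` are positive. -/
def emdenDomain : Set (ℝ × ℝ × ℝ × ℝ) := {x | 0 < x.1 ∧ 0 < x.2.1}

/-- `a` and `b` are positive and solve the Emden system on `s`, with derivatives `p` and `q`. -/
structure IsEmdenSolutionOn (ξ lam γ : ℝ) (a b p q : ℝ → ℝ) (s : Set ℝ) : Prop where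
  pos_a : ∀ t ∈ s, 0 < a t
  pos_b : ∀ t ∈ s, 0 < b t
  hasDerivWithinAt_a : ∀ t ∈ s, HasDerivWithinAt a (p t) s t
  hasDerivWithinAt_b : ∀ t ∈ s, HasDerivWithinAt b (q t) s t
  hasDerivWithinAt_p : ∀ t ∈ s, HasDerivWithinAt p (radialAcceleration ξ lam γ (a t, b t)) s t
  hasDerivWithinAt_q : ∀ t ∈ s, HasDerivWithinAt q (axialAcceleration lam γ (a t, b t)) s t

/-- The conserved energy of the Emden system: kinetic, centrifugal and internal energy, the last
one at specific volume `a ^ 2 * b`. -/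
noncomputable def emdenEnergy (ξ lam γ a b p q : ℝ) : ℝ :=
  p ^ 2 + q ^ 2 / 2 + ξ ^ 2 / a ^ 2 + lam * internalEnergy γ (a ^ 2 * b)

variable {ξ lam γ : ℝ}

theorem contDiffAt_radialAcceleration {n : WithTop ℕ∞} {z : ℝ × ℝ} (h₁ : 0 < z.1) (h₂ : 0 < z.2) :
    ContDiffAt ℝ n (radialAcceleration ξ lam γ) z :=
  (contDiffAt_const.div (contDiffAt_fst.pow 3) (by positivity)).add
    (contDiffAt_const.div ((contDiffAt_fst.rpow_const_of_ne h₁.ne').mul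
      (contDiffAt_snd.rpow_const_of_ne h₂.ne')) (by positivity))

theorem contDiffAt_axialAcceleration {n : WithTop ℕ∞} {z : ℝ × ℝ} (h₁ : 0 < z.1) (h₂ : 0 < z.2) :
    ContDiffAt ℝ n (axialAcceleration lam γ) z :=
  contDiffAt_const.div ((contDiffAt_fst.rpow_const_of_ne h₁.ne').mul
    (contDiffAt_snd.rpow_const_of_ne h₂.ne')) (by positivity)

theorem contDiffOn_emdenField {n : WithTop ℕ∞} :
    ContDiffOn ℝ n (emdenField ξ lam γ) emdenDomain := by
  rintro x ⟨ha, hb⟩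
  have h_pos : ContDiffAt ℝ n (fun x : ℝ × ℝ × ℝ × ℝ => (x.1, x.2.1)) x := by fun_prop
  have h_rad : ContDiffAt ℝ n (radialAcceleration ξ lam γ) (x.1, x.2.1) :=
    contDiffAt_radialAcceleration ha hb
  have h_ax : ContDiffAt ℝ n (axialAcceleration lam γ) (x.1, x.2.1) :=
    contDiffAt_axialAcceleration ha hb
  exact (contDiffAt_snd.snd.fst.prodMk (contDiffAt_snd.snd.snd.prodMk
    ((h_rad.comp x h_pos).prodMk (h_ax.comp x h_pos)))).contDiffWithinAt

theorem isOpen_emdenDomain : IsOpen emdenDomain :=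
  (isOpen_lt continuous_const continuous_fst).inter
    (isOpen_lt continuous_const (continuous_fst.comp continuous_snd))

theorem IsEmdenSolutionOn.of_isIntegralCurveOn {x : ℝ → ℝ × ℝ × ℝ × ℝ} {s : Set ℝ}
    (hx : IsIntegralCurveOn x (fun _ => emdenField ξ lam γ) s) (h_dom : MapsTo x s emdenDomain) :
    IsEmdenSolutionOn ξ lam γ (fun t => (x t).1) (fun t => (x t).2.1) (fun t => (x t).2.2.1)
      (fun t => (x t).2.2.2) s where
  pos_a _ ht := (h_dom ht).1
  pos_b _ ht := (h_dom ht).2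
  hasDerivWithinAt_a t ht := (hx t ht).fst
  hasDerivWithinAt_b t ht := (hx t ht).snd.fst
  hasDerivWithinAt_p t ht := (hx t ht).snd.snd.fst
  hasDerivWithinAt_q t ht := (hx t ht).snd.snd.snd

section Accelerations

variable {a b : ℝ}

theorem rpow_neg_sq_mul (ha : 0 < a) (hb : 0 < b) :
    (a ^ 2 * b) ^ (-γ) = (a ^ (2 * γ) * b ^ γ)⁻¹ := by
  rw [Real.rpow_neg (by positivity), Real.mul_rpow (by positivity) hb.le,
    ← Real.rpow_natCast_mul ha.le, Nat.cast_ofNat]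

theorem radialAcceleration_eq (ha : 0 < a) (hb : 0 < b) :
    radialAcceleration ξ lam γ (a, b) = ξ ^ 2 / a ^ 3 + lam * (a ^ 2 * b) ^ (-γ) * (a * b) := by
  rw [radialAcceleration, rpow_neg_sq_mul ha hb, Real.rpow_sub ha, Real.rpow_sub hb,
    Real.rpow_one, Real.rpow_one]
  field_simp

theorem axialAcceleration_eq (ha : 0 < a) (hb : 0 < b) :
    axialAcceleration lam γ (a, b) = lam * (a ^ 2 * b) ^ (-γ) * a ^ 2 := by
  rw [axialAcceleration, rpow_neg_sq_mul ha hb, Real.rpow_sub ha, Real.rpow_ofNat]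
  field_simp

end Accelerations

theorem sq_velocity_le_emdenEnergy (hγ : 1 ≤ γ) (hlam : 0 ≤ lam) {a b : ℝ} (ha : 0 < a)
    (hb : 0 < b) (p q : ℝ) :
    p ^ 2 + q ^ 2 / 2 ≤ emdenEnergy ξ lam γ a b p q + lam * (2 * a + b) := by
  have h_log : Real.log (a ^ 2 * b) ≤ 2 * a + b := by
    rw [Real.log_mul (by positivity) hb.ne', Real.log_pow, Nat.cast_ofNat]
    linarith [Real.log_le_self ha.le, Real.log_le_self hb.le]
  have h_internal : -(2 * a + b) ≤ internalEnergy γ (a ^ 2 * b) :=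
    (neg_le_neg h_log).trans (neg_log_le_internalEnergy hγ (by positivity))
  have h_centrifugal : 0 ≤ ξ ^ 2 / a ^ 2 := by positivity
  rw [emdenEnergy]
  linarith [mul_le_mul_of_nonneg_left h_internal hlam]

theorem exp_neg_emdenEnergy_div_le_volume (hγ : 1 ≤ γ) (hlam : 0 < lam) {a b : ℝ} (ha : 0 < a)
    (hb : 0 < b) (p q : ℝ) :
    Real.exp (-(emdenEnergy ξ lam γ a b p q / lam)) ≤ a ^ 2 * b := by
  have h_vol : 0 < a ^ 2 * b := by positivity
  have h_energy : lam * internalEnergy γ (a ^ 2 * b) ≤ emdenEnergy ξ lam γ a b p q :=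
    le_add_of_nonneg_left (by positivity)
  rw [← Real.le_log_iff_exp_le h_vol, neg_le, le_div_iff₀' hlam]
  exact (mul_le_mul_of_nonneg_left (neg_log_le_internalEnergy hγ h_vol) hlam.le).trans h_energy

namespace IsEmdenSolutionOn

variable {a b p q : ℝ → ℝ} {s : Set ℝ} {T : ℝ}

theorem continuousOn_position (h : IsEmdenSolutionOn ξ lam γ a b p q s) :
    ContinuousOn (fun t => (a t, b t)) s := fun t ht =>
  ((h.hasDerivWithinAt_a t ht).prodMk (h.hasDerivWithinAt_b t ht)).continuousWithinAt

theorem hasDerivWithinAt_emdenEnergy (h : IsEmdenSolutionOn ξ lam γ a b p q s) {t : ℝ}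
    (ht : t ∈ s) :
    HasDerivWithinAt (fun t => emdenEnergy ξ lam γ (a t) (b t) (p t) (q t)) 0 s t := by
  have ha := h.pos_a t ht
  have hb := h.pos_b t ht
  have h_volume := ((h.hasDerivWithinAt_a t ht).fun_pow 2).fun_mul (h.hasDerivWithinAt_b t ht)
  have h_radial := (h.hasDerivWithinAt_p t ht).fun_pow 2
  have h_axial := ((h.hasDerivWithinAt_q t ht).fun_pow 2).div_const 2
  have h_centrifugal := (hasDerivWithinAt_const t s (ξ ^ 2)).fun_div
    ((h.hasDerivWithinAt_a t ht).fun_pow 2) (by positivity)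
  have h_internal := ((hasDerivAt_internalEnergy γ (by positivity)).comp_hasDerivWithinAt t
    h_volume).const_mul lam
  refine (((h_radial.fun_add h_axial).fun_add h_centrifugal).fun_add h_internal).congr_deriv ?_
  rw [radialAcceleration_eq ha hb, axialAcceleration_eq ha hb]
  field_simp
  ring

theorem emdenEnergy_eq (h : IsEmdenSolutionOn ξ lam γ a b p q (Icc 0 T)) :
    ∀ t ∈ Icc 0 T, emdenEnergy ξ lam γ (a t) (b t) (p t) (q t) =
      emdenEnergy ξ lam γ (a 0) (b 0) (p 0) (q 0) := by
  refine constant_of_has_deriv_right_zero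
    (fun t ht => (h.hasDerivWithinAt_emdenEnergy ht).continuousWithinAt) fun t ht => ?_
  exact (h.hasDerivWithinAt_emdenEnergy (Ico_subset_Icc_self ht)).mono_of_mem_nhdsWithin
    (Icc_mem_nhdsGE_of_mem ht)

theorem sq_velocity_le (h : IsEmdenSolutionOn ξ lam γ a b p q (Icc 0 T)) (hγ : 1 ≤ γ)
    (hlam : 0 ≤ lam) : ∀ t ∈ Icc 0 T, p t ^ 2 + q t ^ 2 / 2 ≤
      emdenEnergy ξ lam γ (a 0) (b 0) (p 0) (q 0) + lam * (2 * a t + b t) := fun t ht =>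
  h.emdenEnergy_eq t ht ▸ sq_velocity_le_emdenEnergy hγ hlam (h.pos_a t ht) (h.pos_b t ht) _ _

theorem position_le_gronwallBound (h : IsEmdenSolutionOn ξ lam γ a b p q (Icc 0 T)) (hγ : 1 ≤ γ)
    (hlam : 0 ≤ lam) : ∀ t ∈ Icc 0 T, 2 * a t + b t ≤ gronwallBound (2 * a 0 + b 0) lam
      (|emdenEnergy ξ lam γ (a 0) (b 0) (p 0) (q 0)| + 2) t := by
  have h_deriv : ∀ t ∈ Icc 0 T,
      HasDerivWithinAt (fun t => 2 * a t + b t) (2 * p t + q t) (Icc 0 T) t := fun t ht =>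
    ((h.hasDerivWithinAt_a t ht).const_mul 2).fun_add (h.hasDerivWithinAt_b t ht)
  have h_gronwall := le_gronwallBound_of_liminf_deriv_right_le (K := lam)
    (ε := |emdenEnergy ξ lam γ (a 0) (b 0) (p 0) (q 0)| + 2)
    (fun t ht => (h_deriv t ht).continuousWithinAt)
    (fun t ht _ hr => ((h_deriv t (Ico_subset_Icc_self ht)).mono_of_mem_nhdsWithin
      (Icc_mem_nhdsGE_of_mem ht)).liminf_right_slope_le hr) le_rfl fun t ht => ?_
  · simpa only [sub_zero] using h_gronwall
  · -- `2 * p + q ≤ p ^ 2 + q ^ 2 / 2 + 2` turns the bound on the squares into an affine one.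
    have h_vel := h.sq_velocity_le hγ hlam t (Ico_subset_Icc_self ht)
    have h_abs := le_abs_self (emdenEnergy ξ lam γ (a 0) (b 0) (p 0) (q 0))
    linarith [sq_nonneg (p t - 1), sq_nonneg (q t - 1)]

theorem contDiffOn_two (h : IsEmdenSolutionOn ξ lam γ a b p q (Ici 0)) :
    ContDiffOn ℝ 2 a (Ici 0) ∧ ContDiffOn ℝ 2 b (Ici 0) :=
  ⟨contDiffOn_two_Ici_of_hasDerivWithinAt h.hasDerivWithinAt_a h.hasDerivWithinAt_p fun t ht =>
    (contDiffAt_radialAcceleration (n := 0) (h.pos_a t ht) (h.pos_b t ht)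
      ).continuousAt.comp_continuousWithinAt (h.continuousOn_position t ht),
  contDiffOn_two_Ici_of_hasDerivWithinAt h.hasDerivWithinAt_b h.hasDerivWithinAt_q fun t ht =>
    (contDiffAt_axialAcceleration (n := 0) (h.pos_a t ht) (h.pos_b t ht)
      ).continuousAt.comp_continuousWithinAt (h.continuousOn_position t ht)⟩

end IsEmdenSolutionOn

/-- The phase points with lengths at most `M`, velocities at most `R` in absolute value, and volume
`a ^ 2 * b` at least `δ`. -/
def emdenCompact (M R δ : ℝ) : Set (ℝ × ℝ × ℝ × ℝ) :=
  (Icc 0 M ×ˢ Icc 0 M ×ˢ Icc (-R) R ×ˢ Icc (-R) R) ∩ {x | δ ≤ x.1 ^ 2 * x.2.1}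

theorem isCompact_emdenCompact (M R δ : ℝ) : IsCompact (emdenCompact M R δ) :=
  (isCompact_Icc.prod (isCompact_Icc.prod (isCompact_Icc.prod isCompact_Icc))).inter_right
    (isClosed_le (by fun_prop) (by fun_prop))

theorem emdenCompact_subset_emdenDomain {M R δ : ℝ} (hδ : 0 < δ) :
    emdenCompact M R δ ⊆ emdenDomain := by
  rintro ⟨a, b, p, q⟩ ⟨⟨ha, hb, -⟩, h_vol⟩
  have h_vol : 0 < a ^ 2 * b := hδ.trans_le h_vol
  refine ⟨ha.1.lt_of_ne' ?_, hb.1.lt_of_ne' ?_⟩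
  · rintro rfl
    simp at h_vol
  · rintro rfl
    simp at h_vol

theorem exists_confinesUpTo_emdenField (hγ : 1 ≤ γ) (hlam : 0 < lam) {x₀ : ℝ × ℝ × ℝ × ℝ}
    (hx₀ : x₀ ∈ emdenDomain) (T : ℝ) :
    ∃ K ⊆ emdenDomain, IsCompact K ∧
      ConfinesUpTo (emdenField ξ lam γ) emdenDomain x₀ T K := by
  obtain ⟨a₀, b₀, p₀, q₀⟩ := x₀
  obtain ⟨ha₀ : 0 < a₀, hb₀ : 0 < b₀⟩ := hx₀
  set e := emdenEnergy ξ lam γ a₀ b₀ p₀ q₀ with he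
  set M := gronwallBound (2 * a₀ + b₀) lam (|e| + 2) T
  refine ⟨emdenCompact M (|e| + lam * M + 1) (Real.exp (-(e / lam))),
    emdenCompact_subset_emdenDomain (Real.exp_pos _), isCompact_emdenCompact _ _ _,
    fun s hs x h_init hx h_dom => ?_⟩
  have hs_mem := right_mem_Icc.2 hs.1
  have h_sol := IsEmdenSolutionOn.of_isIntegralCurveOn hx h_dom
  have ha := h_sol.pos_a s hs_mem
  have hb := h_sol.pos_b s hs_mem
  have h_energy := h_sol.emdenEnergy_eq s hs_mem
  have h_vel := h_sol.sq_velocity_le hγ hlam.le s hs_mem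
  have h_vol := exp_neg_emdenEnergy_div_le_volume (ξ := ξ) hγ hlam ha hb (x s).2.2.1 (x s).2.2.2
  have h_pos := h_sol.position_le_gronwallBound hγ hlam.le s hs_mem
  simp only [h_energy, h_init, ← he] at h_vel h_vol h_pos
  have h_len : 2 * (x s).1 + (x s).2.1 ≤ M :=
    h_pos.trans (gronwallBound_mono (by positivity) (by positivity) hlam.le hs.2)
  have h_kin : (x s).2.2.1 ^ 2 + (x s).2.2.2 ^ 2 / 2 ≤ |e| + lam * M :=
    h_vel.trans (by gcongr; exact le_abs_self e)
  refine ⟨⟨⟨ha.le, by linarith⟩, ⟨hb.le, by linarith⟩, abs_le.1 ?_, abs_le.1 ?_⟩, h_vol⟩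
  · nlinarith [sq_nonneg (|(x s).2.2.1| - 1), sq_abs (x s).2.2.1]
  · nlinarith [sq_nonneg (|(x s).2.2.2| - 1), sq_abs (x s).2.2.2]

theorem exists_isEmdenSolutionOn_Ici (ξ : ℝ) (hγ : 1 ≤ γ) (hlam : 0 < lam) {a₀ b₀ : ℝ}
    (ha₀ : 0 < a₀) (hb₀ : 0 < b₀) (a₁ b₁ : ℝ) :
    ∃ a b p q : ℝ → ℝ, IsEmdenSolutionOn ξ lam γ a b p q (Ici 0) ∧
      a 0 = a₀ ∧ b 0 = b₀ ∧ p 0 = a₁ ∧ q 0 = b₁ := by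
  have hx₀ : (a₀, b₀, a₁, b₁) ∈ emdenDomain := ⟨ha₀, hb₀⟩
  obtain ⟨x, h_init, hx, h_dom⟩ := exists_isIntegralCurveOn_Ici_of_confinesUpTo isOpen_emdenDomain
    (contDiffOn_emdenField (ξ := ξ)) hx₀ fun T _ => exists_confinesUpTo_emdenField hγ hlam hx₀ T
  exact ⟨_, _, _, _, .of_isIntegralCurveOn hx h_dom, by simp [h_init]⟩

end Emden

theorem emden_system_global_existence_lambda_pos_general
    (ξ lam γ a₀ a₁ b₀ b₁ : ℝ)
    (hγ : 1 ≤ γ) (hlam : 0 < lam) (ha₀ : 0 < a₀) (hb₀ : 0 < b₀) :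
    ∃ a b : ℝ → ℝ,
      ContDiffOn ℝ 2 a (Set.Ici 0) ∧ ContDiffOn ℝ 2 b (Set.Ici 0) ∧
      (∀ t ∈ Set.Ici (0 : ℝ), 0 < a t ∧ 0 < b t) ∧
      (∀ t ∈ Set.Ici (0 : ℝ),
        derivWithin (derivWithin a (Set.Ici 0)) (Set.Ici 0) t
          - ξ ^ 2 / (a t) ^ 3
          = lam / ((a t) ^ (2 * γ - 1) * (b t) ^ (γ - 1))) ∧
      (∀ t ∈ Set.Ici (0 : ℝ),
        derivWithin (derivWithin b (Set.Ici 0)) (Set.Ici 0) t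
          = lam / ((a t) ^ (2 * γ - 2) * (b t) ^ γ)) ∧
      a 0 = a₀ ∧ derivWithin a (Set.Ici 0) 0 = a₁ ∧
      b 0 = b₀ ∧ derivWithin b (Set.Ici 0) 0 = b₁ := by
  obtain ⟨a, b, p, q, h, ha, hb, hp, hq⟩ :=
    exists_isEmdenSolutionOn_Ici ξ hγ hlam ha₀ hb₀ a₁ b₁
  have h_unique := uniqueDiffOn_Ici (0 : ℝ) 0 self_mem_Ici
  refine ⟨a, b, h.contDiffOn_two.1, h.contDiffOn_two.2, fun t ht => ⟨h.pos_a t ht, h.pos_b t ht⟩,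
    fun t ht => ?_, ?_, ha, ?_, hb, ?_⟩
  · rw [derivWithin_derivWithin_Ici_of_hasDerivWithinAt h.hasDerivWithinAt_a h.hasDerivWithinAt_p
      t ht, radialAcceleration, add_sub_cancel_left]
  · exact derivWithin_derivWithin_Ici_of_hasDerivWithinAt h.hasDerivWithinAt_b h.hasDerivWithinAt_q
  · rw [(h.hasDerivWithinAt_a 0 self_mem_Ici).derivWithin h_unique, hp]
  · rw [(h.hasDerivWithinAt_b 0 self_mem_Ici).derivWithin h_unique, hq]

/-- Global existence for the Emden dynamical system when λ > 0:
    for ξ ≠ 0, γ ≥ 1, λ > 0, a₀ > 0, b₀ > 0 there exist positive C² functions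
    a, b on [0,∞) solving a'' − ξ²/a³ = λ/(a^{2γ−1} b^{γ−1}),
    b'' = λ/(a^{2γ−2} b^γ) with a(0) = a₀, a'(0) = a₁, b(0) = b₀, b'(0) = b₁.
    (Here `lam` denotes λ; derivatives on [0,∞) are `derivWithin`.) -/
theorem emden_system_global_existence_lambda_pos
    (ξ lam γ a₀ a₁ b₀ b₁ : ℝ)
    (hξ : ξ ≠ 0) (hγ : 1 ≤ γ) (hlam : 0 < lam) (ha₀ : 0 < a₀) (hb₀ : 0 < b₀) :
    ∃ a b : ℝ → ℝ,
      ContDiffOn ℝ 2 a (Set.Ici 0) ∧ ContDiffOn ℝ 2 b (Set.Ici 0) ∧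
      (∀ t ∈ Set.Ici (0 : ℝ), 0 < a t ∧ 0 < b t) ∧
      (∀ t ∈ Set.Ici (0 : ℝ),
        derivWithin (derivWithin a (Set.Ici 0)) (Set.Ici 0) t
          - ξ ^ 2 / (a t) ^ 3
          = lam / ((a t) ^ (2 * γ - 1) * (b t) ^ (γ - 1))) ∧
      (∀ t ∈ Set.Ici (0 : ℝ),
        derivWithin (derivWithin b (Set.Ici 0)) (Set.Ici 0) t
          = lam / ((a t) ^ (2 * γ - 2) * (b t) ^ γ)) ∧
      a 0 = a₀ ∧ derivWithin a (Set.Ici 0) 0 = a₁ ∧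
      b 0 = b₀ ∧ derivWithin b (Set.Ici 0) 0 = b₁ :=
  emden_system_global_existence_lambda_pos_general ξ lam γ a₀ a₁ b₀ b₁ hγ hlam ha₀ hb₀
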